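/- The minimal non-faces of the r-independence complex Ind_r(G) of a finite simple graph G are exactly the (r+1)-subsets A of V(G) such that the induced subgraph G[A] is connected; equivalently, the Stanley–Reisner ideal of Ind_r(G) is generated by the square-free monomials x_A over all (r+1)-subsets A with G[A] connected. -/

import Mathlib

/-- A set `W` of vertices is `r`-independent in `G` if every connected component
of the induced subgraph `G[W]` has at most `r` vertices. -/
def SimpleGraph.IsRIndepSet {V : Type*} (G : SimpleGraph V) (r : ℕ) (W : Set V) : Prop :=
  ∀ c : (G.induce W).ConnectedComponent, c.supp.ncard ≤ r

theorem image_conn {V : Type*} (G : SimpleGraph V) (W : Set V) (S : Set W)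
    (h : ((G.induce W).induce S).Connected) :
    (G.induce (Set.image Subtype.val S)).Connected := by
  refine h.map (SimpleGraph.induceHom (SimpleGraph.Embedding.induce W).toHom
    (Set.mapsTo_image _ _)) ?_
  rintro ⟨_, x, hx, rfl⟩
  exact ⟨⟨x, hx⟩, rfl⟩

theorem exists_conn {V : Type*} [Fintype V] [DecidableEq V] (G : SimpleGraph V)
    (r : ℕ) (A : Finset V) (h : ¬ G.IsRIndepSet r (A : Set V)) :
    ∃ C ⊆ A, r < C.card ∧ (G.induce (C : Set V)).Connected := by
  classical
  unfold SimpleGraph.IsRIndepSet at h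
  push Not at h
  obtain ⟨c, hc⟩ := h
  refine ⟨(Set.image Subtype.val c.supp).toFinset, ?_, ?_, ?_⟩
  · intro x hx
    simp only [Set.mem_toFinset] at hx
    obtain ⟨y, _, rfl⟩ := hx
    exact y.2
  · rw [← Set.ncard_eq_toFinset_card', Set.ncard_image_of_injective _ Subtype.val_injective]
    exact hc
  · rw [Set.coe_toFinset]
    exact image_conn G _ _ c.connected_toSimpleGraph

theorem not_indep {V : Type*} [Fintype V] [DecidableEq V] (G : SimpleGraph V)
    (r : ℕ) (A : Finset V) (h : r < A.card) (hA : (G.induce (A : Set V)).Connected) :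
    ¬ G.IsRIndepSet r (A : Set V) := by
  intro hi
  obtain ⟨v⟩ := hA.nonempty
  have h1 := hi ((G.induce (A : Set V)).connectedComponentMk v)
  have h2 : ((G.induce (A : Set V)).connectedComponentMk v).supp = Set.univ := by
    ext u
    simpa using hA.preconnected u v
  rw [h2, Set.ncard_univ] at h1
  simp at h1
  omega

/-- The minimal non-faces of `Ind_r(G)` are exactly the `(r+1)`-subsets `A` of
`V(G)` with `G[A]` connected; equivalently, the Stanley–Reisner ideal of
`Ind_r(G)` is generated by the squarefree monomials `x_A` over such `A`. -/
theorem stmt16 {V : Type*} [Fintype V] [DecidableEq V] (G : SimpleGraph V)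
    (r : ℕ) (hr : 1 ≤ r) (A : Finset V) :
    (¬ G.IsRIndepSet r (A : Set V) ∧
        ∀ B : Finset V, B ⊂ A → G.IsRIndepSet r (B : Set V)) ↔
      (A.card = r + 1 ∧ (G.induce (A : Set V)).Connected) := by
  classical
  constructor
  · rintro ⟨hA, hmin⟩
    obtain ⟨C, hCA, hC, hconn⟩ := exists_conn G r A hA
    obtain rfl : C = A := by
      by_contra hne
      exact not_indep G r C hC hconn (hmin C (hCA.ssubset_of_ne hne))
    refine ⟨?_, hconn⟩
    by_contra hne
    have : Nontrivial (C : Set V) := by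
      have : 1 < C.card := by omega
      exact (Finset.one_lt_card_iff_nontrivial.mp this).coe_sort
    obtain ⟨v, hv⟩ := hconn.exists_connected_induce_compl_singleton_of_finite_nontrivial
    have h2 := image_conn G _ _ hv
    have h3 : (Set.image Subtype.val ({v}ᶜ : Set (C : Set V))) = ((C.erase v.1 : Finset V) : Set V) := by
      ext x
      simp only [Set.mem_image, Set.mem_compl_iff, Set.mem_singleton_iff, Subtype.exists,
        Finset.coe_erase, Set.mem_sdiff]
      constructor
      · rintro ⟨a, ha, hne, rfl⟩
        exact ⟨ha, fun h => hne (Subtype.ext h)⟩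
      · rintro ⟨ha, hne⟩
        exact ⟨x, ha, fun h => hne (congrArg Subtype.val h), rfl⟩
    rw [h3] at h2
    have hvC : v.1 ∈ C := v.2
    have h4 := Finset.card_erase_of_mem hvC
    exact not_indep G r _ (by omega) h2 (hmin _ (Finset.erase_ssubset hvC))
  · rintro ⟨hcard, hconn⟩
    refine ⟨not_indep G r A (by omega) hconn, fun B hB => ?_⟩
    by_contra h
    obtain ⟨C, hCB, hC, -⟩ := exists_conn G r B h
    have := Finset.card_le_card hCB
    have := Finset.card_lt_card hB
    omega
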